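/- With Φ_0(x) = ∏_{j<k} sin((x_k−x_j)/2)^{λ M_j M_k} (on the wedge −π < x_1 < ⋯ < x_N < π, with M_j > 0 and λ > 0), the differential operator H_N = −∑_j (1/M_j) ∂²/∂x_j² + ∑_{j<k} γ_{jk}/(4 sin²((x_j−x_k)/2)) with γ_{jk} = (M_j+M_k)λ(M_j M_k λ − 1) satisfies H_N Φ_0 = E_0 Φ_0, where E_0 = (λ²/12)·((∑_j M_j)³ − ∑_j M_j³). -/

import Mathlib

open Real Finset

lemma cs_sum_Ioi {N : ℕ} (f : Fin N → Fin N → ℝ) (hs : ∀ j k, f j k = f k j)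
    (hd : ∀ j, f j j = 0) :
    ∑ j, ∑ k ∈ Finset.Ioi j, f j k = (1 / 2) * ∑ j, ∑ k, f j k := by
  have e1 : ∀ j, ∑ k ∈ Finset.Ioi j, f j k = ∑ k, if j < k then f j k else 0 := by
    intro j
    rw [← Finset.sum_filter]
    congr 1
    ext k; simp
  simp_rw [e1]
  have e2 : ∑ j, ∑ k, f j k = ∑ j, ∑ k, (if j < k then f j k else 0)
      + ∑ j, ∑ k, (if k < j then f k j else 0) := by
    simp_rw [← Finset.sum_add_distrib]
    refine Finset.sum_congr rfl fun j _ => Finset.sum_congr rfl fun k _ => ?_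
    rcases lt_trichotomy j k with h | h | h
    · simp [h, h.not_gt]
    · subst h; simp [hd]
    · simp [h, h.not_gt, hs j k]
  have e3 : ∑ j, ∑ k, (if k < j then f k j else 0)
      = ∑ j, ∑ k, (if j < k then f j k else 0) := Finset.sum_comm
  rw [e2, e3]; ring

/-- pointwise cotangent identity -/
lemma cs_cot (a b c : ℝ) (h1 : sin ((a - b) / 2) ≠ 0) (h2 : sin ((b - c) / 2) ≠ 0)
    (h3 : sin ((a - c) / 2) ≠ 0) :
    cos ((a - b) / 2) / sin ((a - b) / 2) * (cos ((a - c) / 2) / sin ((a - c) / 2))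
    - cos ((a - b) / 2) / sin ((a - b) / 2) * (cos ((b - c) / 2) / sin ((b - c) / 2))
    + cos ((a - c) / 2) / sin ((a - c) / 2) * (cos ((b - c) / 2) / sin ((b - c) / 2)) = -1 := by
  have e : (a - c) / 2 = (a - b) / 2 + (b - c) / 2 := by ring
  rw [e] at h3 ⊢
  set u := (a - b) / 2
  set v := (b - c) / 2
  have hs := sin_add u v
  have hc := cos_add u v
  field_simp
  rw [hs, hc]
  have := sin_sq_add_cos_sq u
  have := sin_sq_add_cos_sq v
  ring

lemma cs_algebra {N : ℕ} (M : Fin N → ℝ) (C S : Fin N → Fin N → ℝ)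
    (hC : ∀ i k, C i k = - C k i) (hS : ∀ i k, S i k = S k i) (hS0 : ∀ i, S i i = 0)
    (hCS : ∀ i k, i ≠ k → S i k = 1 + C i k ^ 2)
    (hcot : ∀ i k l, i ≠ k → k ≠ l → i ≠ l →
      C i k * C i l - C i k * C k l + C i l * C k l = -1) :
    3 * ∑ i, M i * (∑ k, M k * C i k) ^ 2 =
      -(∑ i, M i) ^ 3 + ∑ i, M i ^ 3 + 3 * ∑ i, ∑ k, M i ^ 2 * M k * S i k := by
  have hC0 : ∀ i, C i i = 0 := fun i => by linarith [hC i i]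
  have F : ∀ i k l, C i k * C i l + C k l * C k i + C l i * C l k =
      -1 + (if i = k then S l i else 0) + (if k = l then S i k else 0)
        + (if l = i then S k l else 0) + (if i = k then if k = l then 1 else 0 else 0) := by
    intro i k l
    by_cases h1 : i = k
    · subst h1
      by_cases h2 : i = l
      · subst h2; simp [hC0, hS0]
      · simp [h2, Ne.symm h2, hC0, hCS l i (Ne.symm h2)]; ring
    · by_cases h2 : k = l
      · subst h2
        simp [h1, Ne.symm h1, hC0, hCS i k h1]; ring
      · by_cases h3 : l = i
        · subst h3
          simp [h1, h2, hC0, hCS k l h2]; ring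
        · simp only [h1, h2, h3, if_false]
          have := hcot i k l h1 h2 (Ne.symm h3)
          rw [hC k i, hC l i, hC l k]; linarith
  have T : ∑ i, M i * (∑ k, M k * C i k) ^ 2
      = ∑ i, ∑ k, ∑ l, M i * M k * M l * (C i k * C i l) := by
    refine Finset.sum_congr rfl fun i _ => ?_
    rw [sq, Finset.sum_mul_sum, Finset.mul_sum]
    refine Finset.sum_congr rfl fun k _ => ?_
    rw [Finset.mul_sum]
    refine Finset.sum_congr rfl fun l _ => ?_
    ring
  have cyc : ∀ g : Fin N → Fin N → Fin N → ℝ,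
      ∑ i, ∑ k, ∑ l, g k l i = ∑ i, ∑ k, ∑ l, g i k l := by
    intro g
    rw [Finset.sum_comm]
    refine Finset.sum_congr rfl fun k _ => ?_
    rw [Finset.sum_comm]
  have T2 : ∑ i, ∑ k, ∑ l, M i * M k * M l * (C k l * C k i)
      = ∑ i, ∑ k, ∑ l, M i * M k * M l * (C i k * C i l) := by
    rw [← cyc (fun i k l => M i * M k * M l * (C i k * C i l))]
    refine Finset.sum_congr rfl fun i _ => Finset.sum_congr rfl fun k _ =>
      Finset.sum_congr rfl fun l _ => ?_
    ring
  have T3 : ∑ i, ∑ k, ∑ l, M i * M k * M l * (C l i * C l k)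
      = ∑ i, ∑ k, ∑ l, M i * M k * M l * (C i k * C i l) := by
    rw [← T2, ← cyc (fun i k l => M i * M k * M l * (C k l * C k i))]
    refine Finset.sum_congr rfl fun i _ => Finset.sum_congr rfl fun k _ =>
      Finset.sum_congr rfl fun l _ => ?_
    ring
  have cube : (∑ i, M i) ^ 3 = ∑ i, ∑ k, ∑ l, M i * M k * M l := by
    rw [pow_succ, sq, Finset.sum_mul_sum, Finset.sum_mul]
    refine Finset.sum_congr rfl fun i _ => ?_
    rw [Finset.sum_mul]
    refine Finset.sum_congr rfl fun k _ => ?_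
    rw [Finset.mul_sum]
  have key : 3 * ∑ i, ∑ k, ∑ l, M i * M k * M l * (C i k * C i l)
      = ∑ i, ∑ k, ∑ l, M i * M k * M l * (-1 + (if i = k then S l i else 0)
        + (if k = l then S i k else 0)
        + (if l = i then S k l else 0) + (if i = k then if k = l then 1 else 0 else 0)) := by
    simp_rw [← F, mul_add, Finset.sum_add_distrib]
    rw [T2, T3]; ring
  rw [T, key, cube]
  simp_rw [mul_add, Finset.sum_add_distrib]
  have A1 : ∑ i, ∑ k, ∑ l, M i * M k * M l * (if i = k then S l i else 0)
      = ∑ i, ∑ k, M i ^ 2 * M k * S i k := by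
    refine Finset.sum_congr rfl fun i _ => ?_
    rw [Finset.sum_comm]
    refine Finset.sum_congr rfl fun l _ => ?_
    simp only [mul_ite, mul_zero, Finset.sum_ite_eq, Finset.sum_ite_eq', Finset.mem_univ, if_true]
    rw [hS l i]; ring
  have A2 : ∑ i, ∑ k, ∑ l, M i * M k * M l * (if k = l then S i k else 0)
      = ∑ i, ∑ k, M i ^ 2 * M k * S i k := by
    rw [Finset.sum_comm]
    refine Finset.sum_congr rfl fun k _ => Finset.sum_congr rfl fun i _ => ?_
    simp only [mul_ite, mul_zero, Finset.sum_ite_eq, Finset.sum_ite_eq', Finset.mem_univ, if_true]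
    rw [hS i k]; ring
  have A3 : ∑ i, ∑ k, ∑ l, M i * M k * M l * (if l = i then S k l else 0)
      = ∑ i, ∑ k, M i ^ 2 * M k * S i k := by
    refine Finset.sum_congr rfl fun i _ => Finset.sum_congr rfl fun k _ => ?_
    simp only [mul_ite, mul_zero, Finset.sum_ite_eq, Finset.sum_ite_eq', Finset.mem_univ, if_true]
    rw [hS k i]; ring
  have A4 : ∑ i, ∑ k, ∑ l, M i * M k * M l * (if i = k then if k = l then 1 else 0 else 0)
      = ∑ i, M i ^ 3 := by
    refine Finset.sum_congr rfl fun i _ => ?_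
    rw [Finset.sum_eq_single i]
    · simp; ring
    · intro b _ hb; simp [Ne.symm hb]
    · simp
  rw [A1, A2, A3, A4]
  simp only [mul_neg, mul_one, Finset.sum_neg_distrib]
  ring

lemma cs_sub_deriv {N : ℕ} (x : Fin N → ℝ) (i j k : Fin N) (t : ℝ) :
    HasDerivAt (fun s => (Function.update x i s k - Function.update x i s j) / 2)
      (((if k = i then 1 else 0) - (if j = i then 1 else 0)) / 2) t := by
  have h : ∀ k, HasDerivAt (fun s => Function.update x i s k) (if k = i then 1 else 0) t := by
    intro k
    by_cases hk : k = i
    · subst hk; simpa using hasDerivAt_id' t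
    · simpa [hk, Function.update_of_ne hk] using hasDerivAt_const t (x k)
  exact ((h k).sub (h j)).div_const 2

/-- symmetrized logarithm of the ground state -/
noncomputable def csL {N : ℕ} (M : Fin N → ℝ) (lam : ℝ) (y : Fin N → ℝ) : ℝ :=
  (1 / 2) * ∑ j, ∑ k, (lam * M j * M k) * log (sin ((y k - y j) / 2))

noncomputable def csG {N : ℕ} (M : Fin N → ℝ) (lam : ℝ) (i : Fin N) (y : Fin N → ℝ) : ℝ :=
  ∑ k, (lam * M i * M k / 2) * (cos ((y i - y k) / 2) / sin ((y i - y k) / 2))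

lemma cs_exp {N : ℕ} (M : Fin N → ℝ) (lam : ℝ) (y : Fin N → ℝ)
    (hy : ∀ j k, j < k → 0 < sin ((y k - y j) / 2)) :
    ∏ j, ∏ k ∈ Finset.Ioi j, sin ((y k - y j) / 2) ^ (lam * M j * M k)
      = exp (csL M lam y) := by
  unfold csL
  rw [← cs_sum_Ioi, exp_sum]
  · refine Finset.prod_congr rfl fun j _ => ?_
    rw [exp_sum]
    refine Finset.prod_congr rfl fun k hk => ?_
    rw [rpow_def_of_pos (hy j k (by simpa using hk)), mul_comm]
  · intro j k
    rw [show (y k - y j) / 2 = -((y j - y k) / 2) by ring, sin_neg, log_neg_eq_log]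
    ring
  · simp

lemma cs_L_deriv {N : ℕ} (M : Fin N → ℝ) (lam : ℝ) (x : Fin N → ℝ) (i : Fin N) (t : ℝ)
    (hy : ∀ j k, j ≠ k → sin ((Function.update x i t k - Function.update x i t j) / 2) ≠ 0) :
    HasDerivAt (fun s => csL M lam (Function.update x i s))
      (csG M lam i (Function.update x i t)) t := by
  set y := Function.update x i t with hyd
  have h1 : ∀ j k, HasDerivAt (fun s => (lam * M j * M k) *
        log (sin ((Function.update x i s k - Function.update x i s j) / 2)))
      ((lam * M j * M k) * (cos ((y k - y j) / 2) / sin ((y k - y j) / 2) *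
        (((if k = i then 1 else 0) - (if j = i then 1 else 0)) / 2))) t := by
    intro j k
    by_cases hjk : j = k
    · subst hjk; simpa using hasDerivAt_const t (0:ℝ)
    · have := ((cs_sub_deriv x i j k t).sin.log (hy j k hjk)).const_mul (lam * M j * M k)
      refine this.congr_deriv ?_
      ring
  have h2 := (HasDerivAt.fun_sum (u := Finset.univ) fun j _ =>
    HasDerivAt.fun_sum (u := Finset.univ) fun k _ => h1 j k).const_mul (1 / 2 : ℝ)
  unfold csL csG
  refine h2.congr_deriv ?_
  symm
  simp only [sub_div, mul_sub, Finset.sum_sub_distrib, ite_div, zero_div, mul_ite, mul_zero,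
    Finset.sum_ite_eq', Finset.mem_univ, if_true]
  have e : ∑ j, ∑ k, (if j = i then lam * M j * M k *
      (cos (y k / 2 - y j / 2) / sin (y k / 2 - y j / 2) * (1 / 2)) else 0)
      = - ∑ k, lam * M k * M i * (cos (y i / 2 - y k / 2) / sin (y i / 2 - y k / 2) * (1 / 2)) := by
    rw [Finset.sum_comm]
    simp only [Finset.sum_ite_eq', Finset.mem_univ, if_true]
    rw [← Finset.sum_neg_distrib]
    refine Finset.sum_congr rfl fun k _ => ?_
    rw [← neg_sub (y i / 2) (y k / 2), cos_neg, sin_neg, div_neg]; ring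
  rw [e, mul_neg, sub_neg_eq_add, ← mul_add, ← Finset.sum_add_distrib, Finset.mul_sum]
  refine Finset.sum_congr rfl fun k _ => ?_
  ring

lemma cs_G_deriv {N : ℕ} (M : Fin N → ℝ) (lam : ℝ) (x : Fin N → ℝ) (i : Fin N)
    (hy : ∀ k, i ≠ k → sin ((x i - x k) / 2) ≠ 0) :
    HasDerivAt (fun s => csG M lam i (Function.update x i s))
      (-∑ k, (lam * M i * M k / 4) * (1 / sin ((x i - x k) / 2) ^ 2)) (x i) := by
  unfold csG
  rw [← Finset.sum_neg_distrib]
  refine HasDerivAt.fun_sum fun k _ => ?_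
  by_cases hk : i = k
  · subst hk; simpa using hasDerivAt_const (x i) (0:ℝ)
  · have h := cs_sub_deriv x i k i (x i)
    have hs : sin ((Function.update x i (x i) i - Function.update x i (x i) k) / 2) ≠ 0 := by
      simpa using hy k hk
    have := (h.cos.div h.sin hs).const_mul (lam * M i * M k / 2)
    refine this.congr_deriv ?_
    symm
    simp only [Function.update_eq_self, if_true, if_neg (Ne.symm hk)]
    have h0 := hy k hk
    have h3 := sin_sq_add_cos_sq ((x i - x k) / 2)
    field_simp
    linear_combination (lam * M i * M k * 4) * h3

/-- With `Φ₀(x) = ∏_{j<k} sin((x_k−x_j)/2)^{λM_jM_k}` on the wedge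
`−π < x_1 < ⋯ < x_N < π` (`M_j > 0`, `λ > 0`), the generalized CS operator
`H_N = −∑_j (1/M_j)∂²/∂x_j² + ∑_{j<k} γ_{jk}/(4sin²((x_j−x_k)/2))`,
`γ_{jk} = (M_j+M_k)λ(M_jM_kλ−1)`, satisfies `H_N Φ₀ = E₀ Φ₀` with
`E₀ = (λ²/12)((∑M_j)³ − ∑M_j³)`. -/
theorem stmt4 (N : ℕ) (M : Fin N → ℝ) (hM : ∀ j, 0 < M j) (lam : ℝ) (hlam : 0 < lam)
    (x : Fin N → ℝ) (hwedge : StrictMono x)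
    (hlo : ∀ j, -Real.pi < x j) (hhi : ∀ j, x j < Real.pi)
    (Φ : (Fin N → ℝ) → ℝ)
    (hΦ : ∀ y, Φ y = ∏ j, ∏ k ∈ Finset.Ioi j,
        Real.sin ((y k - y j) / 2) ^ (lam * M j * M k)) :
    (-∑ j, (1 / M j) * (deriv^[2] (fun t => Φ (Function.update x j t)) (x j)))
      + (∑ j, ∑ k ∈ Finset.Ioi j,
          ((M j + M k) * lam * (M j * M k * lam - 1)) / (4 * Real.sin ((x j - x k) / 2)^2)) * Φ x
    = ((lam^2 / 12) * ((∑ j, M j)^3 - ∑ j, (M j)^3)) * Φ x := by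
  have hpos : ∀ j k, j < k → 0 < sin ((x k - x j) / 2) := by
    intro j k h
    have := hwedge h
    apply sin_pos_of_pos_of_lt_pi <;> linarith [hlo j, hhi k]
  have hne' : ∀ y : Fin N → ℝ, (∀ j k, j < k → 0 < sin ((y k - y j) / 2)) →
      ∀ j k, j ≠ k → sin ((y k - y j) / 2) ≠ 0 := by
    intro y hy j k h
    rcases lt_or_gt_of_ne h with h | h
    · exact (hy j k h).ne'
    · rw [show (y k - y j) / 2 = -((y j - y k) / 2) by ring, sin_neg]
      exact neg_ne_zero.mpr (hy k j h).ne'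
  have hne : ∀ j k, j ≠ k → sin ((x j - x k) / 2) ≠ 0 := fun j k h => hne' x hpos k j h.symm
  have hev : ∀ i, ∀ᶠ t in nhds (x i), ∀ j k, j < k →
      0 < sin ((Function.update x i t k - Function.update x i t j) / 2) := by
    intro i
    rw [Filter.eventually_all]; intro j
    rw [Filter.eventually_all]; intro k
    by_cases hjk : j < k
    · have hc := (cs_sub_deriv x i j k (x i)).sin.continuousAt
      have := hc.eventually (lt_mem_nhds (a := 0) (by simpa using hpos j k hjk))
      filter_upwards [this] with t ht _ using ht
    · exact Filter.Eventually.of_forall fun t h => absurd h hjk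
  have hd2 : ∀ i, deriv^[2] (fun t => Φ (Function.update x i t)) (x i) =
      (csG M lam i x ^ 2 - ∑ k, (lam * M i * M k / 4) * (1 / sin ((x i - x k) / 2) ^ 2)) * Φ x := by
    intro i
    have e1 : (fun t => Φ (Function.update x i t)) =ᶠ[nhds (x i)]
        fun t => exp (csL M lam (Function.update x i t)) := by
      filter_upwards [hev i] with t ht
      rw [hΦ, cs_exp M lam _ ht]
    have e2 : deriv (fun t => exp (csL M lam (Function.update x i t))) =ᶠ[nhds (x i)]
        fun t => exp (csL M lam (Function.update x i t)) * csG M lam i (Function.update x i t) := by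
      filter_upwards [hev i] with t ht
      exact (cs_L_deriv M lam x i t (hne' _ ht)).exp.deriv
    have e3 := (e1.deriv.trans e2).deriv_eq
    have h1 := (cs_L_deriv M lam x i (x i) (by simpa using hne' x hpos)).exp
    have h2 := cs_G_deriv M lam x i (hne i)
    have h3 := (h1.mul h2).deriv
    simp only [Function.iterate_succ, Function.iterate_zero, Function.comp, id]
    rw [e3]
    refine h3.trans ?_
    rw [hΦ x, cs_exp M lam x hpos]
    simp only [Function.update_eq_self]
    ring
  have alg := cs_algebra M (fun i k => cos ((x i - x k) / 2) / sin ((x i - x k) / 2))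
    (fun i k => 1 / sin ((x i - x k) / 2) ^ 2)
    (by intro i k
        rw [show (x i - x k) / 2 = -((x k - x i) / 2) by ring, sin_neg, cos_neg, div_neg])
    (by intro i k
        rw [show (x i - x k) / 2 = -((x k - x i) / 2) by ring, sin_neg, neg_sq])
    (by simp)
    (by intro i k h
        have h0 := hne i k h
        have h1 := sin_sq_add_cos_sq ((x i - x k) / 2)
        field_simp
        linarith)
    (by intro i k l h1 h2 h3
        exact cs_cot _ _ _ (hne i k h1) (hne k l h2) (hne i l h3))
  have hS : ∀ i k, 1 / sin ((x i - x k) / 2) ^ 2 = 1 / sin ((x k - x i) / 2) ^ 2 := by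
    intro i k
    rw [show (x i - x k) / 2 = -((x k - x i) / 2) by ring, sin_neg, neg_sq]
  have hG : ∀ i, csG M lam i x = (lam * M i / 2) *
      ∑ k, M k * (cos ((x i - x k) / 2) / sin ((x i - x k) / 2)) := by
    intro i
    unfold csG
    rw [Finset.mul_sum]
    exact Finset.sum_congr rfl fun k _ => by ring
  have hkin : ∑ j, (1 / M j) * (deriv^[2] (fun t => Φ (Function.update x j t)) (x j))
      = ((lam ^ 2 / 4) * ∑ i, M i * (∑ k, M k * (cos ((x i - x k) / 2) / sin ((x i - x k) / 2))) ^ 2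
        - (lam / 4) * ∑ i, ∑ k, M k * (1 / sin ((x i - x k) / 2) ^ 2)) * Φ x := by
    rw [Finset.mul_sum, Finset.mul_sum, ← Finset.sum_sub_distrib, Finset.sum_mul]
    refine Finset.sum_congr rfl fun i _ => ?_
    rw [hd2 i, hG i]
    have e : ∑ k, (lam * M i * M k / 4) * (1 / sin ((x i - x k) / 2) ^ 2)
        = (lam * M i / 4) * ∑ k, M k * (1 / sin ((x i - x k) / 2) ^ 2) := by
      rw [Finset.mul_sum]
      exact Finset.sum_congr rfl fun k _ => by ring
    rw [e]
    have := (hM i).ne'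
    generalize ∑ k, M k * (1 / sin ((x i - x k) / 2) ^ 2) = A
    generalize ∑ k, M k * (cos ((x i - x k) / 2) / sin ((x i - x k) / 2)) = B
    field_simp
    ring
  have hpot : ∑ j, ∑ k ∈ Finset.Ioi j,
      ((M j + M k) * lam * (M j * M k * lam - 1)) / (4 * sin ((x j - x k) / 2)^2)
      = (lam ^ 2 / 4) * ∑ i, ∑ k, M i ^ 2 * M k * (1 / sin ((x i - x k) / 2) ^ 2)
        - (lam / 4) * ∑ i, ∑ k, M k * (1 / sin ((x i - x k) / 2) ^ 2) := by
    rw [cs_sum_Ioi]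
    · have c1 : ∑ i, ∑ k, M i * M k ^ 2 * (1 / sin ((x i - x k) / 2) ^ 2)
          = ∑ i, ∑ k, M i ^ 2 * M k * (1 / sin ((x i - x k) / 2) ^ 2) := by
        rw [Finset.sum_comm]
        refine Finset.sum_congr rfl fun i _ => Finset.sum_congr rfl fun k _ => ?_
        rw [hS k i]; ring
      have c2 : ∑ i, ∑ k, M i * (1 / sin ((x i - x k) / 2) ^ 2)
          = ∑ i, ∑ k, M k * (1 / sin ((x i - x k) / 2) ^ 2) := by
        rw [Finset.sum_comm]
        refine Finset.sum_congr rfl fun i _ => Finset.sum_congr rfl fun k _ => ?_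
        rw [hS k i]
      have c3 : ∑ j, ∑ k, ((M j + M k) * lam * (M j * M k * lam - 1)) /
            (4 * sin ((x j - x k) / 2)^2)
          = (lam ^ 2 / 4) * (∑ i, ∑ k, M i ^ 2 * M k * (1 / sin ((x i - x k) / 2) ^ 2)
              + ∑ i, ∑ k, M i * M k ^ 2 * (1 / sin ((x i - x k) / 2) ^ 2))
            - (lam / 4) * (∑ i, ∑ k, M k * (1 / sin ((x i - x k) / 2) ^ 2)
              + ∑ i, ∑ k, M i * (1 / sin ((x i - x k) / 2) ^ 2)) := by
        simp_rw [← Finset.sum_add_distrib, Finset.mul_sum, ← Finset.sum_sub_distrib]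
        refine Finset.sum_congr rfl fun i _ => Finset.sum_congr rfl fun k _ => ?_
        rw [div_mul_eq_div_div, div_eq_mul_one_div _ (sin ((x i - x k) / 2) ^ 2)]
        ring
      rw [c3, c1, c2]; ring
    · intro j k
      rw [div_mul_eq_div_div, div_mul_eq_div_div, div_eq_mul_one_div _ (sin ((x j - x k) / 2) ^ 2),
        div_eq_mul_one_div _ (sin ((x k - x j) / 2) ^ 2), hS j k]
      ring
    · simp
  rw [hkin, hpot]
  linear_combination (-(lam ^ 2 / 12) * Φ x) * alg
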